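/- Suppose T^I ∈ Λ²V* for each I in O = {01,02,03,23,31,12} on a 4-dimensional real vector space V satisfy T^I ∧ T^J = ε^{IJ} ω for a fixed nonzero ω ∈ Λ⁴V*. Then there exist linearly independent covectors ξ⁰,…,ξ³ ∈ V* and α ∈ {0,1,2,3} such that T^J = Y^J_{(α)I} ξ^I (where ξ^I = ξ^{I₁}∧ξ^{I₂}), with Y_{(0)} = −Id, Y_{(1)} = Id, Y_{(2)} the 6×6 matrix exchanging the first and last three basis 2-forms, and Y_{(3)} the same matrix with the (3,6) and (6,3) entries replaced by −1. -/

import Mathlib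

/-!
The argument is spinorial. A 2-form `u` gives the skew matrix `formMat u` of its components and
the skew matrix `dualMat u` of the dual form, and the identities
`formMat u * dualMat v + formMat v * dualMat u = -(u ∧ v)` (`form_mul_dual`, `dual_mul_form`)
say that `formMat` and `dualMat` are the two off-diagonal blocks of a representation of the
Clifford algebra of `(Λ²V*, ∧)` on `V* ⊕ V`. With respect to it `T⁰¹, T⁰², T⁰³` are
annihilation operators and `T²³, T³¹, T¹²` the matching creation operators, so there is a vacuum,
which lies either in `V*` or in `V`. In the first case it is a nonzero covector `v` with
`v ∧ T⁰ⁱ = 0` for all `i`; in the second case the completely filled state, three creation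
operators applied to the vacuum, lies in `V*` and is a nonzero covector annihilated by
`T²³, T³¹, T¹²` (`exists_common_covector`).

In the first case `T⁰ⁱ = v ∧ aᵢ`, the covectors `v, a₁, a₂, a₃` form a basis, and in it the
`T^{jk}` are `μ aⱼ ∧ aₖ` plus a combination of the `T⁰ⁱ` whose coefficients form a skew matrix.
Replacing `aᵢ` by `aᵢ + sᵢ v` removes that combination, and rescaling reduces to `μ = ±1`
(`normal_form_of_common_covector`). This gives `±Id`. The second case becomes the first after
exchanging `T⁰ⁱ` and `T^{jk}`, and leads to the two remaining matrices.
-/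

open Matrix

noncomputable section

/-- The Levi-Civita permutation symbol on four indices in `{0,1,2,3}`. -/
def eps (i j k l : Fin 4) : ℝ :=
  (((j : ℕ) : ℝ) - ((i : ℕ) : ℝ)) * (((k : ℕ) : ℝ) - ((i : ℕ) : ℝ)) *
    (((l : ℕ) : ℝ) - ((i : ℕ) : ℝ)) * (((k : ℕ) : ℝ) - ((j : ℕ) : ℝ)) *
    (((l : ℕ) : ℝ) - ((j : ℕ) : ℝ)) * (((l : ℕ) : ℝ) - ((k : ℕ) : ℝ)) / 12

/-- First indices of the ordered pairs `O = {01, 02, 03, 23, 31, 12}`. -/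
def p1 : Fin 6 → Fin 4 := ![0, 0, 0, 2, 3, 1]

/-- Second indices of the ordered pairs `O = {01, 02, 03, 23, 31, 12}`. -/
def p2 : Fin 6 → Fin 4 := ![1, 2, 3, 3, 1, 2]

/-- The `6 × 6` matrix `(ε^{IJ})_{I,J ∈ O}` with `ε^{IJ} = ε^{I₁I₂J₁J₂}`. -/
def Bmat : Matrix (Fin 6) (Fin 6) ℝ :=
  Matrix.of fun I J => eps (p1 I) (p2 I) (p1 J) (p2 J)

/-- The wedge product `u ∧ v ∈ Λ⁴(ℝ⁴)*` of two 2-forms given by their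
components in the basis `{dx^I : I ∈ O}`, as a multiple of the volume form. -/
def wedge6 (u v : Fin 6 → ℝ) : ℝ := u ⬝ᵥ (Bmat *ᵥ v)

/-- The components in the basis `{dx^I : I ∈ O}` of the wedge product
`a ∧ b` of two covectors `a, b ∈ (ℝ⁴)*`. -/
def wedgeVec (a b : Fin 4 → ℝ) : Fin 6 → ℝ :=
  fun I => a (p1 I) * b (p2 I) - a (p2 I) * b (p1 I)

/-- The four matrices `H₍₀₎ = −Id`, `H₍₁₎ = Id`, `H₍₂₎` (exchanging the first
and last three basis 2-forms) and `H₍₃₎` (the same with the `(3,6)` and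
`(6,3)` entries replaced by `−1`). -/
def Hmat : Fin 4 → Matrix (Fin 6) (Fin 6) ℝ :=
  ![-1, 1,
    !![0,0,0,1,0,0; 0,0,0,0,1,0; 0,0,0,0,0,1;
       1,0,0,0,0,0; 0,1,0,0,0,0; 0,0,1,0,0,0],
    !![0,0,0,1,0,0; 0,0,0,0,1,0; 0,0,0,0,0,-1;
       1,0,0,0,0,0; 0,1,0,0,0,0; 0,0,-1,0,0,0]]

/-! ### The Clifford action of 2-forms -/

/-- The skew-symmetric `4 × 4` matrix of components of a 2-form. -/
def formMat (u : Fin 6 → ℝ) : Matrix (Fin 4) (Fin 4) ℝ :=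
  !![0, u 0, u 1, u 2; -u 0, 0, u 5, -u 4; -u 1, -u 5, 0, u 3; -u 2, u 4, -u 3, 0]

/-- The component matrix of the dual of a 2-form `u`; the entries of `dualMat u *ᵥ x` are, up to
sign, the components of the 3-form `u ∧ x`. -/
def dualMat (u : Fin 6 → ℝ) : Matrix (Fin 4) (Fin 4) ℝ :=
  !![0, u 3, u 4, u 5; -u 3, 0, u 2, -u 1; -u 4, -u 2, 0, u 0; -u 5, u 1, -u 0, 0]

lemma wedge6_eq (u v : Fin 6 → ℝ) :
    wedge6 u v = u 0 * v 3 + u 1 * v 4 + u 2 * v 5 + u 3 * v 0 + u 4 * v 1 + u 5 * v 2 := by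
  simp [wedge6, Bmat, eps, p1, p2, Matrix.mulVec, dotProduct, Fin.sum_univ_succ]
  ring

lemma form_mul_dual (u v : Fin 6 → ℝ) :
    formMat u * dualMat v + formMat v * dualMat u =
      (-wedge6 u v) • (1 : Matrix (Fin 4) (Fin 4) ℝ) := by
  rw [wedge6_eq]
  ext i j
  fin_cases i <;> fin_cases j <;>
    simp [formMat, dualMat] <;> ring

lemma dual_mul_form (u v : Fin 6 → ℝ) :
    dualMat u * formMat v + dualMat v * formMat u =
      (-wedge6 u v) • (1 : Matrix (Fin 4) (Fin 4) ℝ) := by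
  rw [wedge6_eq]
  ext i j
  fin_cases i <;> fin_cases j <;>
    simp [formMat, dualMat] <;> ring

lemma Bmat_apply (I J : Fin 6) : Bmat I J = if J = I + 3 then 1 else 0 := by
  fin_cases I <;> fin_cases J <;> norm_num [Bmat, eps, p1, p2] <;> decide

/-! ### Divisibility, determinants and expansion in a basis -/

/-- A 2-form whose wedge product with a nonzero covector `v` vanishes is divisible by `v`. The
quotient is the contraction of the form with `v`, divided by `|v|²`. -/
lemma exists_eq_wedgeVec (u : Fin 6 → ℝ) (v : Fin 4 → ℝ) (hv : v ≠ 0)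
    (h : dualMat u *ᵥ v = 0) : ∃ a, u = wedgeVec v a := by
  have hn : v 0 ^ 2 + v 1 ^ 2 + v 2 ^ 2 + v 3 ^ 2 ≠ 0 := by
    intro h0
    apply hv
    ext i
    fin_cases i <;> simp <;>
      nlinarith [sq_nonneg (v 0), sq_nonneg (v 1), sq_nonneg (v 2), sq_nonneg (v 3)]
  have e0 := congrFun h 0
  have e1 := congrFun h 1
  have e2 := congrFun h 2
  have e3 := congrFun h 3
  simp [dualMat, Matrix.mulVec, dotProduct, Fin.sum_univ_succ] at e0 e1 e2 e3
  refine ⟨(v 0 ^ 2 + v 1 ^ 2 + v 2 ^ 2 + v 3 ^ 2)⁻¹ • (v ᵥ* formMat u), ?_⟩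
  ext K
  fin_cases K <;>
    simp [wedgeVec, p1, p2, formMat, Matrix.vecHead, Matrix.vecTail] <;>
    field_simp
  · linear_combination v 3 * e2 - v 2 * e3
  · linear_combination v 1 * e3 - v 3 * e1
  · linear_combination v 2 * e1 - v 1 * e2
  · linear_combination v 1 * e0 - v 0 * e1
  · linear_combination v 2 * e0 - v 0 * e2
  · linear_combination v 3 * e0 - v 0 * e3

/-- `ξ⁰ ∧ ξ¹ ∧ ξ² ∧ ξ³` is the determinant of the components. -/
lemma wedge6_wedgeVec_eq_det (ξ : Fin 4 → Fin 4 → ℝ) :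
    wedge6 (wedgeVec (ξ 0) (ξ 1)) (wedgeVec (ξ 2) (ξ 3)) = (Matrix.of ξ).det := by
  rw [wedge6_eq]
  simp [wedgeVec, p1, p2, Matrix.det_succ_row_zero, Fin.sum_univ_succ, Fin.succAbove]
  ring

lemma linearIndependent_of_wedge_ne_zero (ξ : Fin 4 → Fin 4 → ℝ)
    (h : wedge6 (wedgeVec (ξ 0) (ξ 1)) (wedgeVec (ξ 2) (ξ 3)) ≠ 0) :
    LinearIndependent ℝ ξ := by
  rw [wedge6_wedgeVec_eq_det] at h
  exact Matrix.linearIndependent_rows_of_det_ne_zero h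

/-- Cramer's rule for expanding a 2-form `u` in the basis `ξ^I`: the coefficient of each `ξ^I` is
the wedge product of `u` with the complementary basis 2-form. -/
lemma wedge6_wedgeVec_smul_eq_sum (ξ : Fin 4 → Fin 4 → ℝ) (u : Fin 6 → ℝ) (K : Fin 6) :
    wedge6 (wedgeVec (ξ 0) (ξ 1)) (wedgeVec (ξ 2) (ξ 3)) * u K =
      wedge6 u (wedgeVec (ξ 2) (ξ 3)) * wedgeVec (ξ 0) (ξ 1) K +
      wedge6 u (wedgeVec (ξ 3) (ξ 1)) * wedgeVec (ξ 0) (ξ 2) K +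
      wedge6 u (wedgeVec (ξ 1) (ξ 2)) * wedgeVec (ξ 0) (ξ 3) K +
      wedge6 u (wedgeVec (ξ 0) (ξ 1)) * wedgeVec (ξ 2) (ξ 3) K +
      wedge6 u (wedgeVec (ξ 0) (ξ 2)) * wedgeVec (ξ 3) (ξ 1) K +
      wedge6 u (wedgeVec (ξ 0) (ξ 3)) * wedgeVec (ξ 1) (ξ 2) K := by
  simp only [wedge6_eq]
  fin_cases K <;> simp [wedgeVec, p1, p2] <;> ring

lemma wedge6_add_right (u v w : Fin 6 → ℝ) : wedge6 u (v + w) = wedge6 u v + wedge6 u w := by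
  simp only [wedge6_eq, Pi.add_apply]; ring

lemma wedge6_smul_right (r : ℝ) (u v : Fin 6 → ℝ) : wedge6 u (r • v) = r * wedge6 u v := by
  simp only [wedge6_eq, Pi.smul_apply, smul_eq_mul]; ring

/-! ### Existence of the vacuum -/

/-- Either `T⁰¹, T⁰², T⁰³` or `T²³, T³¹, T¹²` have a common covector factor. In the
proof `F I` and `G I` are the blocks `V → V*` and `V* → V` of the Clifford action of `T^I`; the
operators with `I = 0, 1, 2` annihilate, those with `I = 3, 4, 5` create. -/
lemma exists_common_covector (T : Fin 6 → Fin 6 → ℝ) (c : ℝ) (hc : c ≠ 0)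
    (hT : ∀ I J : Fin 6, wedge6 (T I) (T J) = Bmat I J * c) :
    (∃ v, v ≠ 0 ∧ dualMat (T 0) *ᵥ v = 0 ∧ dualMat (T 1) *ᵥ v = 0 ∧ dualMat (T 2) *ᵥ v = 0) ∨
    (∃ v, v ≠ 0 ∧ dualMat (T 3) *ᵥ v = 0 ∧ dualMat (T 4) *ᵥ v = 0 ∧
      dualMat (T 5) *ᵥ v = 0) := by
  set F := fun I => formMat (T I) with hF
  set G := fun I => dualMat (T I) with hG
  have FG : ∀ I J x, F I *ᵥ (G J *ᵥ x) = -(if J = I + 3 then c else 0) • x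
      - F J *ᵥ (G I *ᵥ x) := by
    intro I J x
    have h := congrArg (· *ᵥ x) (form_mul_dual (T I) (T J))
    simp only [hT, Bmat_apply, Matrix.add_mulVec, Matrix.smul_mulVec, Matrix.one_mulVec,
      ← Matrix.mulVec_mulVec, ite_mul, one_mul, zero_mul] at h
    rw [← h]; abel
  have GF : ∀ I J x, G I *ᵥ (F J *ᵥ x) = -(if J = I + 3 then c else 0) • x
      - G J *ᵥ (F I *ᵥ x) := by
    intro I J x
    have h := congrArg (· *ᵥ x) (dual_mul_form (T I) (T J))
    simp only [hT, Bmat_apply, Matrix.add_mulVec, Matrix.smul_mulVec, Matrix.one_mulVec,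
      ← Matrix.mulVec_mulVec, ite_mul, one_mul, zero_mul] at h
    rw [← h]; abel
  have FGa : ∀ I J x, J ≠ I + 3 → F I *ᵥ (G J *ᵥ x) = - F J *ᵥ (G I *ᵥ x) := by
    intro I J x h
    rw [FG, if_neg h]; simp [Matrix.neg_mulVec]
  have GFa : ∀ I J x, J ≠ I + 3 → G I *ᵥ (F J *ᵥ x) = - G J *ᵥ (F I *ᵥ x) := by
    intro I J x h
    rw [GF, if_neg h]; simp [Matrix.neg_mulVec]
  have FGc : ∀ I x, F I *ᵥ (G (I + 3) *ᵥ x) = -c • x - F (I + 3) *ᵥ (G I *ᵥ x) := by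
    intro I x
    rw [FG, if_pos rfl]
  have GFc : ∀ I x, G I *ᵥ (F (I + 3) *ᵥ x) = -c • x - G (I + 3) *ᵥ (F I *ᵥ x) := by
    intro I x
    rw [GF, if_pos rfl]
  have FG0 : ∀ I x, F I *ᵥ (G I *ᵥ x) = 0 := by
    intro I x
    have := FGa I I x (by fin_cases I <;> decide)
    rw [Matrix.neg_mulVec] at this
    exact self_eq_neg.mp this
  have GF0 : ∀ I x, G I *ᵥ (F I *ᵥ x) = 0 := by
    intro I x
    have := GFa I I x (by fin_cases I <;> decide)
    rw [Matrix.neg_mulVec] at this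
    exact self_eq_neg.mp this
  -- If the product of the three annihilation operators is nonzero on `V`, the vectors in its
  -- image are vacua lying in `V*`.
  by_cases hX : ∃ x, F 0 *ᵥ (G 1 *ᵥ (F 2 *ᵥ x)) ≠ 0
  · obtain ⟨x, hx⟩ := hX
    refine Or.inl ⟨_, hx, GF0 0 _, ?_, ?_⟩
    · change G 1 *ᵥ _ = 0
      rw [GFa 1 0 _ (by decide), FG0]; simp
    · change G 2 *ᵥ _ = 0
      rw [GFa 2 0 _ (by decide), FGa 2 1 _ (by decide), GF0]; simp
  by_cases hY : ∃ x, G 0 *ᵥ (F 1 *ᵥ (G 2 *ᵥ x)) ≠ 0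
  · -- The vacuum is `y ∈ V`; the filled state `F 3 G 4 F 5 y` is the covector sought.
    obtain ⟨x, hx⟩ := hY
    generalize hy : G 0 *ᵥ (F 1 *ᵥ (G 2 *ᵥ x)) = y at hx
    have y0 : F 0 *ᵥ y = 0 := by rw [← hy, FG0]
    have y1 : F 1 *ᵥ y = 0 := by
      rw [← hy, FGa 1 0 _ (by decide), GF0]; simp
    have y2 : F 2 *ᵥ y = 0 := by
      rw [← hy, FGa 2 0 _ (by decide), GFa 2 1 _ (by decide), FG0]; simp
    refine Or.inr ⟨F 3 *ᵥ (G 4 *ᵥ (F 5 *ᵥ y)), ?_, GF0 3 _, ?_, ?_⟩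
    · intro h
      have s1 : G 4 *ᵥ (F 5 *ᵥ y) = 0 := by
        have := GFc 0 (G 4 *ᵥ (F 5 *ᵥ y))
        rw [show (0 : Fin 6) + 3 = 3 from rfl, h, FGa 0 4 _ (by decide), GFa 0 5 _ (by decide),
          y0] at this
        simpa [hc] using this
      have s2 : F 5 *ᵥ y = 0 := by
        have := FGc 1 (F 5 *ᵥ y)
        rw [show (1 : Fin 6) + 3 = 4 from rfl, s1, GFa 1 5 _ (by decide), y1] at this
        simpa [hc] using this
      have := GFc 2 y
      rw [show (2 : Fin 6) + 3 = 5 from rfl, s2, y2] at this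
      exact hx (by simpa [hc] using this)
    · change G 4 *ᵥ _ = 0
      rw [GFa 4 3 _ (by decide), FG0]; simp
    · change G 5 *ᵥ _ = 0
      rw [GFa 5 3 _ (by decide), FGa 5 4 _ (by decide), GF0]; simp
  · -- The product of the three annihilation operators cannot vanish: anticommuting it with
    -- creation operators would strip off the factors one at a time and give `c = 0`.
    exfalso
    push Not at hX hY
    have a : ∀ x, F 0 *ᵥ (G 1 *ᵥ x) = 0 := by
      intro x
      have := hX (G 5 *ᵥ x)
      rw [show (5 : Fin 6) = 2 + 3 from rfl, FGc 2, Matrix.mulVec_sub, Matrix.mulVec_sub,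
        show (2 : Fin 6) + 3 = 5 from rfl, GFa 1 5 _ (by decide), Matrix.neg_mulVec,
        Matrix.mulVec_neg, FGa 0 5 _ (by decide), Matrix.neg_mulVec, hY] at this
      simpa [hc, Matrix.mulVec_smul, Matrix.mulVec_neg] using this
    have b : ∀ x, G 0 *ᵥ (F 1 *ᵥ x) = 0 := by
      intro x
      have := hY (F 5 *ᵥ x)
      rw [show (5 : Fin 6) = 2 + 3 from rfl, GFc 2, Matrix.mulVec_sub, Matrix.mulVec_sub,
        show (2 : Fin 6) + 3 = 5 from rfl, FGa 1 5 _ (by decide), Matrix.neg_mulVec,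
        Matrix.mulVec_neg, GFa 0 5 _ (by decide), Matrix.neg_mulVec, hX] at this
      simpa [hc, Matrix.mulVec_smul, Matrix.mulVec_neg] using this
    have a' : ∀ x, F 0 *ᵥ x = 0 := by
      intro x
      have := a (F 4 *ᵥ x)
      rw [show (4 : Fin 6) = 1 + 3 from rfl, GFc 1, Matrix.mulVec_sub,
        show (1 : Fin 6) + 3 = 4 from rfl, FGa 0 4 _ (by decide), Matrix.neg_mulVec, b] at this
      simpa [hc, Matrix.mulVec_smul, Matrix.mulVec_neg] using this
    have b' : ∀ x, G 0 *ᵥ x = 0 := by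
      intro x
      have := b (G 4 *ᵥ x)
      rw [show (4 : Fin 6) = 1 + 3 from rfl, FGc 1, Matrix.mulVec_sub,
        show (1 : Fin 6) + 3 = 4 from rfl, GFa 0 4 _ (by decide), Matrix.neg_mulVec, a] at this
      simpa [hc, Matrix.mulVec_smul, Matrix.mulVec_neg] using this
    have := FGc 0 (Pi.single 0 1)
    rw [a', b'] at this
    simp [hc] at this

/-! ### The normal form -/

/-- If `T⁰ⁱ = v ∧ aᵢ`, then `v, a₁, a₂, a₃` is a basis: wedging a linear relation with `v` gives a
relation between the `T⁰ⁱ`, which are independent because they pair perfectly with the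
`T^{jk}`. -/
lemma wedge_ne_zero_of_factor (T : Fin 6 → Fin 6 → ℝ) (c : ℝ) (hc : c ≠ 0)
    (hT : ∀ I J : Fin 6, wedge6 (T I) (T J) = Bmat I J * c)
    (v a₁ a₂ a₃ : Fin 4 → ℝ) (hv : v ≠ 0) (h0 : T 0 = wedgeVec v a₁)
    (h1 : T 1 = wedgeVec v a₂) (h2 : T 2 = wedgeVec v a₃) :
    wedge6 (wedgeVec v a₁) (wedgeVec a₂ a₃) ≠ 0 := by
  intro h
  have hdet := wedge6_wedgeVec_eq_det ![v, a₁, a₂, a₃]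
  simp only [Matrix.cons_val] at hdet
  rw [h] at hdet
  obtain ⟨w, hw, hwM⟩ := Matrix.exists_vecMul_eq_zero_iff.mpr hdet.symm
  have hrel : ∀ i, w 0 * v i + w 1 * a₁ i + w 2 * a₂ i + w 3 * a₃ i = 0 := by
    intro i
    have := congrFun hwM i
    simp [Matrix.vecMul, dotProduct, Fin.sum_univ_succ] at this
    linear_combination this
  have hT0 : w 1 • T 0 + w 2 • T 1 + w 3 • T 2 = 0 := by
    rw [h0, h1, h2]
    ext K
    simp only [wedgeVec, Pi.add_apply, Pi.smul_apply, smul_eq_mul, Pi.zero_apply]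
    linear_combination v (p1 K) * hrel (p2 K) - v (p2 K) * hrel (p1 K)
  have key : ∀ J, (w 1 * Bmat J 0 + w 2 * Bmat J 1 + w 3 * Bmat J 2) * c = 0 := by
    intro J
    have hz : wedge6 (T J) 0 = 0 := by simp [wedge6_eq]
    rw [← hT0] at hz
    simp only [wedge6_add_right, wedge6_smul_right, hT] at hz
    linear_combination hz
  have w1 : w 1 = 0 := by simpa [Bmat_apply, hc] using key 3
  have w2 : w 2 = 0 := by simpa [Bmat_apply, hc] using key 4
  have w3 : w 3 = 0 := by simpa [Bmat_apply, hc] using key 5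
  have w0 : w 0 = 0 := by
    by_contra h
    apply hv
    ext i
    simpa [w1, w2, w3, h] using hrel i
  apply hw
  ext i
  fin_cases i <;> assumption

/-- A common covector factor `v` of `T⁰¹, T⁰², T⁰³` extends to a basis `v, a₁, a₂, a₃` with
`T⁰ⁱ = v ∧ aᵢ` and `T^{jk} = μ aⱼ ∧ aₖ`. -/
lemma exists_adapted_basis (T : Fin 6 → Fin 6 → ℝ) (c : ℝ) (hc : c ≠ 0)
    (hT : ∀ I J : Fin 6, wedge6 (T I) (T J) = Bmat I J * c)
    (v : Fin 4 → ℝ) (hv : v ≠ 0) (h0 : dualMat (T 0) *ᵥ v = 0)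
    (h1 : dualMat (T 1) *ᵥ v = 0) (h2 : dualMat (T 2) *ᵥ v = 0) :
    ∃ (a₁ a₂ a₃ : Fin 4 → ℝ) (μ : ℝ), μ ≠ 0 ∧
      T 0 = wedgeVec v a₁ ∧ T 1 = wedgeVec v a₂ ∧ T 2 = wedgeVec v a₃ ∧
      T 3 = μ • wedgeVec a₂ a₃ ∧ T 4 = μ • wedgeVec a₃ a₁ ∧ T 5 = μ • wedgeVec a₁ a₂ := by
  obtain ⟨a₁, e0⟩ := exists_eq_wedgeVec _ v hv h0
  obtain ⟨a₂, e1⟩ := exists_eq_wedgeVec _ v hv h1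
  obtain ⟨a₃, e2⟩ := exists_eq_wedgeVec _ v hv h2
  have hl := wedge_ne_zero_of_factor T c hc hT v a₁ a₂ a₃ hv e0 e1 e2
  have cramer := fun J => wedge6_wedgeVec_smul_eq_sum ![v, a₁, a₂, a₃] (T J)
  simp only [Matrix.cons_val] at cramer
  set l := wedge6 (wedgeVec v a₁) (wedgeVec a₂ a₃)
  rw [← e0, ← e1, ← e2] at cramer
  simp only [hT] at cramer
  -- `q i J` is the coefficient of `T⁰ⁱ` in `l • T^J`.
  set q : Fin 3 → Fin 6 → ℝ := fun i J => wedge6 (T J)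
    (![wedgeVec a₂ a₃, wedgeVec a₃ a₁, wedgeVec a₁ a₂] i) with hq
  have cr : ∀ J, l • T J = q 0 J • T 0 + q 1 J • T 1 + q 2 J • T 2 + (Bmat J 0 * c) •
      wedgeVec a₂ a₃ + (Bmat J 1 * c) • wedgeVec a₃ a₁ + (Bmat J 2 * c) • wedgeVec a₁ a₂ := by
    intro J
    ext K
    simpa [hq] using cramer J K
  have anti : ∀ I J, l * (Bmat I J * c) = q 0 J * (Bmat I 0 * c) + q 1 J * (Bmat I 1 * c) +
      q 2 J * (Bmat I 2 * c) + Bmat J 0 * c * q 0 I + Bmat J 1 * c * q 1 I +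
      Bmat J 2 * c * q 2 I := by
    intro I J
    have := congrArg (wedge6 (T I)) (cr J)
    simp only [wedge6_add_right, wedge6_smul_right, hT] at this
    exact this
  -- The `3 × 3` matrix of these coefficients for `J = 23, 31, 12` is skew-symmetric.
  have q03 : q 0 3 = 0 := by
    have := anti 3 3
    simp [Bmat_apply] at this
    have h : 2 * c * q 0 3 = 0 := by linear_combination -this
    simpa [hc] using h
  have q14 : q 1 4 = 0 := by
    have := anti 4 4
    simp [Bmat_apply] at this
    have h : 2 * c * q 1 4 = 0 := by linear_combination -this
    simpa [hc] using h
  have q25 : q 2 5 = 0 := by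
    have := anti 5 5
    simp [Bmat_apply] at this
    have h : 2 * c * q 2 5 = 0 := by linear_combination -this
    simpa [hc] using h
  have q04 : q 0 4 = -q 1 3 := by
    have := anti 3 4
    simp [Bmat_apply] at this
    exact mul_left_cancel₀ hc (by linear_combination -this)
  have q05 : q 0 5 = -q 2 3 := by
    have := anti 3 5
    simp [Bmat_apply] at this
    exact mul_left_cancel₀ hc (by linear_combination -this)
  have q15 : q 1 5 = -q 2 4 := by
    have := anti 4 5
    simp [Bmat_apply] at this
    exact mul_left_cancel₀ hc (by linear_combination -this)
  have c3 := cr 3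
  have c4 := cr 4
  have c5 := cr 5
  simp [Bmat_apply, q03] at c3
  simp [Bmat_apply, q04, q14] at c4
  simp [Bmat_apply, q05, q15, q25] at c5
  clear_value l q
  -- The shifts of the `aᵢ` by multiples of `v` are chosen to absorb the skew-symmetric part.
  refine ⟨a₁ - (q 2 4 / c) • v, a₂ + (q 2 3 / c) • v, a₃ - (q 1 3 / c) • v, c / l,
    div_ne_zero hc hl, ?_, ?_, ?_, ?_, ?_, ?_⟩
  · rw [e0]; ext K; simp [wedgeVec]; ring
  · rw [e1]; ext K; simp [wedgeVec]; ring
  · rw [e2]; ext K; simp [wedgeVec]; ring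
  · ext K
    have := congrFun c3 K
    simp [e1, e2, wedgeVec] at this ⊢
    field_simp
    linear_combination c * this
  · ext K
    have := congrFun c4 K
    simp [e0, e2, wedgeVec] at this ⊢
    field_simp
    linear_combination c * this
  · ext K
    have := congrFun c5 K
    simp [e0, e1, wedgeVec] at this ⊢
    field_simp
    linear_combination c * this

/-- If `T⁰¹, T⁰², T⁰³` have a common covector factor, then `T^I = ± ξ^I`, with the sign of
the factor `μ` in `exists_adapted_basis`; rescaling the basis absorbs `|μ|`. -/
lemma normal_form_of_common_covector (T : Fin 6 → Fin 6 → ℝ) (c : ℝ) (hc : c ≠ 0)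
    (hT : ∀ I J : Fin 6, wedge6 (T I) (T J) = Bmat I J * c)
    (v : Fin 4 → ℝ) (hv : v ≠ 0) (h0 : dualMat (T 0) *ᵥ v = 0)
    (h1 : dualMat (T 1) *ᵥ v = 0) (h2 : dualMat (T 2) *ᵥ v = 0) :
    ∃ ξ : Fin 4 → Fin 4 → ℝ, LinearIndependent ℝ ξ ∧
      ((∀ I, T I = wedgeVec (ξ (p1 I)) (ξ (p2 I))) ∨
        (∀ I, T I = -wedgeVec (ξ (p1 I)) (ξ (p2 I)))) := by
  obtain ⟨a₁, a₂, a₃, μ, hμ, e0, e1, e2, e3, e4, e5⟩ :=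
    exists_adapted_basis T c hc hT v hv h0 h1 h2
  have hr : 0 < √|μ| := Real.sqrt_pos.mpr (abs_pos.mpr hμ)
  have hr2 : √|μ| ^ 2 = |μ| := Real.sq_sqrt (abs_nonneg μ)
  set r := √|μ|
  clear_value r
  have h03 : wedge6 (T 0) (T 3) ≠ 0 := by
    rw [hT]; simpa [Bmat_apply] using hc
  rcases lt_or_gt_of_ne hμ with hneg | hpos
  · rw [abs_of_neg hneg] at hr2
    have main : ∀ I, T I = -wedgeVec (![-(r⁻¹ • v), r • a₁, r • a₂, r • a₃] (p1 I))
        (![-(r⁻¹ • v), r • a₁, r • a₂, r • a₃] (p2 I)) := by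
      intro I
      obtain rfl : μ = -r ^ 2 := by linarith
      ext K
      fin_cases I <;> simp [e0, e1, e2, e3, e4, e5, p1, p2, wedgeVec] <;> field_simp <;> ring
    refine ⟨_, ?_, Or.inr main⟩
    apply linearIndependent_of_wedge_ne_zero
    have m0 := main 0
    have m3 := main 3
    convert h03 using 1
    rw [m0, m3]
    simp only [wedge6_eq, Pi.neg_apply, p1, p2, Matrix.cons_val]
    ring
  · rw [abs_of_pos hpos] at hr2
    have main : ∀ I, T I = wedgeVec (![r⁻¹ • v, r • a₁, r • a₂, r • a₃] (p1 I))
        (![r⁻¹ • v, r • a₁, r • a₂, r • a₃] (p2 I)) := by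
      intro I
      obtain rfl : μ = r ^ 2 := hr2.symm
      ext K
      fin_cases I <;> simp [e0, e1, e2, e3, e4, e5, p1, p2, wedgeVec] <;> field_simp
    refine ⟨_, ?_, Or.inl main⟩
    apply linearIndependent_of_wedge_ne_zero
    have m0 := main 0
    have m3 := main 3
    convert h03 using 1
    rw [m0, m3]
    simp only [p1, p2, Matrix.cons_val]

/-- If 2-forms `T^I`, `I ∈ O`, satisfy `T^I ∧ T^J = ε^{IJ} ω` for a fixed
nonzero 4-form `ω = c · dx⁰∧dx¹∧dx²∧dx³`, then there are linearly independent
covectors `ξ⁰, …, ξ³` and `α ∈ {0,1,2,3}` with `T^J = Y^J_{(α)I} ξ^I`, where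
`ξ^I = ξ^{I₁} ∧ ξ^{I₂}` and `(Y^J_{(α)I})_{I,J} = H₍α₎`. -/
theorem T_normal_form (T : Fin 6 → Fin 6 → ℝ) (c : ℝ) (hc : c ≠ 0)
    (hT : ∀ I J : Fin 6, wedge6 (T I) (T J) = Bmat I J * c) :
    ∃ (ξ : Fin 4 → Fin 4 → ℝ) (α : Fin 4), LinearIndependent ℝ ξ ∧
      ∀ J K : Fin 6,
        T J K = ∑ I : Fin 6, Hmat α I J * wedgeVec (ξ (p1 I)) (ξ (p2 I)) K := by
  rcases exists_common_covector T c hc hT with ⟨v, hv, h0, h1, h2⟩ | ⟨v, hv, h0, h1, h2⟩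
  · obtain ⟨ξ, hξ, h | h⟩ := normal_form_of_common_covector T c hc hT v hv h0 h1 h2
    · refine ⟨ξ, 1, hξ, fun J K => ?_⟩
      rw [h]
      simp [Hmat, Matrix.one_apply]
    · refine ⟨ξ, 0, hξ, fun J K => ?_⟩
      rw [h]
      simp [Hmat, Matrix.one_apply]
  · -- Adding `3` to an index in `O` exchanges `0i` and `jk`.
    have hT' : ∀ I J : Fin 6, wedge6 (T (I + 3)) (T (J + 3)) = Bmat I J * c := by
      intro I J
      rw [hT, Bmat_apply, Bmat_apply]
      simp
    obtain ⟨ξ, hξ, h | h⟩ :=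
      normal_form_of_common_covector (fun I => T (I + 3)) c hc hT' v hv h0 h1 h2
    · refine ⟨ξ, 2, hξ, fun J K => ?_⟩
      have hJ : T J = wedgeVec (ξ (p1 (J + 3))) (ξ (p2 (J + 3))) := by
        rw [← h (J + 3)]
        congr 1
        fin_cases J <;> rfl
      rw [hJ]
      fin_cases J <;> simp [Hmat, Fin.sum_univ_succ]
    · -- Changing the signs of `ξ⁰` and `ξ³` turns `-H₍₂₎` into `H₍₃₎`.
      refine ⟨(![-1, 1, 1, -1] : Fin 4 → ℝˣ) • ξ, 3, hξ.units_smul _, fun J K => ?_⟩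
      have hJ : T J = -wedgeVec (ξ (p1 (J + 3))) (ξ (p2 (J + 3))) := by
        rw [← h (J + 3)]
        congr 1
        fin_cases J <;> rfl
      rw [hJ]
      fin_cases J <;> simp [Hmat, Fin.sum_univ_succ, wedgeVec, p1, p2] <;> ring
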